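/- Assume that for every choice of 50 pairwise distinct positive integers b₁, …, b₅₀ there exist indices i ≠ j such that there are infinitely many positive integers r with bᵢr − 1 and bⱼr − 1 both prime. Assume also that there exist 50 pairwise distinct positive integers a₁, …, a₅₀ with aᵢ·σ(aⱼ) = aⱼ·σ(aᵢ) for all i, j. Then the set of positive integers k for which the equation σ(n) = σ(n+k) has infinitely many solutions n has positive lower asymptotic density. -/

import Mathlib

/-- The sum-of-divisors function `σ`. -/
def sigma (n : ℕ) : ℕ := ∑ d ∈ n.divisors, d

theorem aux_sigma_eq (n : ℕ) : sigma n = ArithmeticFunction.sigma 1 n := by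
  rw [ArithmeticFunction.sigma_one_apply]; rfl

theorem aux_sigma_mul {a b : ℕ} (h : a.Coprime b) : sigma (a * b) = sigma a * sigma b := by
  simp only [aux_sigma_eq]
  exact ArithmeticFunction.isMultiplicative_sigma.map_mul_of_coprime h

theorem aux_sigma_prime {p : ℕ} (h : p.Prime) : sigma p = p + 1 := by
  unfold sigma
  rw [h.sum_divisors]

theorem aux_sigma_triple {m A u r L : ℕ} (hL : 0 < L) (hu : A * u = L) (hm : m.Coprime L)
    (hm0 : 0 < m) (hr : m * L + 2 < r) (hp : (u * r - 1).Prime) :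
    sigma (m * A * (u * r - 1)) = sigma m * (sigma A * (u * r)) := by
  have hu0 : 0 < u := Nat.pos_of_ne_zero (by rintro rfl; omega)
  have hA0 : 0 < A := Nat.pos_of_ne_zero (by rintro rfl; omega)
  have hAL : A ≤ L := by nlinarith
  have hur : r ≤ u * r := by nlinarith
  have hmA : m * A ≤ m * L := Nat.mul_le_mul_left _ hAL
  have hmA0 : 0 < m * A := by positivity
  have h1 : (m * A).Coprime (u * r - 1) :=
    ((Nat.Prime.coprime_iff_not_dvd hp).2 fun hd => absurd (Nat.le_of_dvd hmA0 hd) (by omega)).symm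
  have h2 : m.Coprime A := Nat.Coprime.coprime_dvd_right ⟨u, hu.symm⟩ hm
  rw [aux_sigma_mul h1, aux_sigma_mul h2, aux_sigma_prime hp, mul_assoc]
  congr 2
  omega

theorem aux_core {A B u v L m : ℕ} (hL : 0 < L) (hu : A * u = L) (hv : B * v = L) (hBA : B < A)
    (hs : A * sigma B = B * sigma A) (hm : m.Coprime L) (hm0 : 0 < m)
    (hR : {r : ℕ | 0 < r ∧ (u * r - 1).Prime ∧ (v * r - 1).Prime}.Infinite) :
    {n : ℕ | 0 < n ∧ sigma n = sigma (n + m * (A - B))}.Infinite := by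
  apply Set.infinite_of_forall_exists_gt
  intro N
  obtain ⟨r, ⟨hr0, hp, hq⟩, hr⟩ := hR.exists_gt (N + m * L + 2)
  have hu0 : 0 < u := Nat.pos_of_ne_zero (by rintro rfl; omega)
  have hv0 : 0 < v := Nat.pos_of_ne_zero (by rintro rfl; omega)
  have hA0 : 0 < A := by omega
  have hur : r ≤ u * r := by nlinarith
  have hvr : r ≤ v * r := by nlinarith
  have hmA0 : 0 < m * A := by positivity
  have hn : u * r - 1 ≤ m * A * (u * r - 1) := Nat.le_mul_of_pos_left _ hmA0
  have hnk : m * A * (u * r - 1) + m * (A - B) = m * B * (v * r - 1) := by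
    obtain ⟨x, hx⟩ : ∃ x, u * r = x + 1 := ⟨u * r - 1, by omega⟩
    obtain ⟨y, hy⟩ : ∃ y, v * r = y + 1 := ⟨v * r - 1, by omega⟩
    obtain ⟨d, rfl⟩ : ∃ d, A = B + d := ⟨A - B, by omega⟩
    have e1 : (B + d) * (x + 1) = B * (y + 1) := by
      rw [← hx, ← hy, ← mul_assoc, ← mul_assoc, hu, hv]
    rw [hx, hy, Nat.add_sub_cancel, Nat.add_sub_cancel, Nat.add_sub_cancel_left,
      mul_assoc, mul_assoc, ← mul_add]
    congr 1
    nlinarith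
  refine ⟨m * A * (u * r - 1), ⟨by omega, ?_⟩, by omega⟩
  rw [hnk, aux_sigma_triple hL hu hm hm0 (by omega) hp,
    aux_sigma_triple hL hv hm hm0 (by omega) hq]
  congr 1
  rw [← mul_assoc, ← mul_assoc]
  congr 1
  apply Nat.eq_of_mul_eq_mul_left hL
  calc L * (sigma A * u) = u * v * (B * sigma A) := by rw [← hv]; ring
    _ = u * v * (A * sigma B) := by rw [hs]
    _ = L * (sigma B * v) := by rw [← hu]; ring

theorem aux_density {S : Set ℕ} {L d : ℕ} (hL : 0 < L) (hd : 0 < d)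
    (h : ∀ t : ℕ, (1 + t * L) * d ∈ S) :
    ∃ c : ℝ, 0 < c ∧ ∀ᶠ N : ℕ in Filter.atTop,
      c * N ≤ ({k : ℕ | 0 < k ∧ k ≤ N ∧ k ∈ S}.ncard : ℝ) := by
  have hLd : 0 < L * d := by positivity
  refine ⟨1 / (2 * (L * d : ℕ)), by positivity, ?_⟩
  filter_upwards [Filter.eventually_ge_atTop (L * d)] with N hN
  have hfin : {k : ℕ | 0 < k ∧ k ≤ N ∧ k ∈ S}.Finite :=
    (Set.finite_Iic N).subset fun k hk => hk.2.1
  have hinj : Function.Injective (fun t : ℕ => (1 + t * L) * d) := by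
    intro s t hst
    have h1 := Nat.eq_of_mul_eq_mul_right hd hst
    exact Nat.eq_of_mul_eq_mul_right hL (by omega)
  have hsub : (((Finset.range (N / (L * d))).image (fun t : ℕ => (1 + t * L) * d) : Finset ℕ) :
      Set ℕ) ⊆ {k : ℕ | 0 < k ∧ k ≤ N ∧ k ∈ S} := by
    intro k hk
    simp only [Finset.coe_image, Set.mem_image, Finset.coe_range, Set.mem_Iio] at hk
    obtain ⟨t, ht, rfl⟩ := hk
    refine ⟨by positivity, ?_, h t⟩
    have h1 : (t + 1) * (L * d) ≤ N := (Nat.le_div_iff_mul_le hLd).1 ht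
    nlinarith
  have hcard := Set.ncard_le_ncard hsub hfin
  rw [Set.ncard_coe_finset, Finset.card_image_of_injective _ hinj, Finset.card_range] at hcard
  have h2 : N ≤ 2 * (L * d) * (N / (L * d)) := by
    have h3 := Nat.div_add_mod N (L * d)
    have h4 := Nat.mod_lt N hLd
    have h5 : 1 ≤ N / (L * d) := (Nat.le_div_iff_mul_le hLd).2 (by omega)
    nlinarith
  have h6 : N ≤ 2 * (L * d) * {k : ℕ | 0 < k ∧ k ≤ N ∧ k ∈ S}.ncard :=
    h2.trans (Nat.mul_le_mul_left _ hcard)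
  have h7 : (N : ℝ) ≤ 2 * (L * d : ℕ) * ({k : ℕ | 0 < k ∧ k ≤ N ∧ k ∈ S}.ncard : ℝ) := by
    exact_mod_cast h6
  rw [one_div_mul_eq_div, div_le_iff₀ (by positivity)]
  linarith

/-- Assuming the consequence of `DHL*(50;2)` for the forms `bᵢr - 1`, and the
existence of 50 pairwise distinct positive integers with equal ratios
`σ(aᵢ)/aᵢ` (a circle of 50 friends), the set of `k` for which
`σ(n) = σ(n+k)` has infinitely many solutions has positive lower density. -/
theorem stmt_19
    (hDHL : ∀ b : Fin 50 → ℕ, (∀ i, 0 < b i) → Function.Injective b →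
      ∃ i j : Fin 50, i ≠ j ∧
        {r : ℕ | 0 < r ∧ (b i * r - 1).Prime ∧ (b j * r - 1).Prime}.Infinite)
    (hfriends : ∃ a : Fin 50 → ℕ, (∀ i, 0 < a i) ∧ Function.Injective a ∧
      ∀ i j, a i * sigma (a j) = a j * sigma (a i)) :
    ∃ c : ℝ, 0 < c ∧ ∀ᶠ N : ℕ in Filter.atTop,
      c * N ≤ ({k : ℕ | 0 < k ∧ k ≤ N ∧
        {n : ℕ | 0 < n ∧ sigma n = sigma (n + k)}.Infinite}.ncard : ℝ) := by
  obtain ⟨a, ha0, hainj, has⟩ := hfriends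
  set L := ∏ i, a i with hLdef
  have hL : 0 < L := Finset.prod_pos fun i _ => ha0 i
  have hdvd : ∀ i, a i ∣ L := fun i => Finset.dvd_prod_of_mem a (Finset.mem_univ i)
  choose b hb using hdvd
  have hb0 : ∀ i, 0 < b i := fun i => Nat.pos_of_ne_zero fun h0 => by
    have := hb i
    rw [h0] at this
    omega
  have hbinj : Function.Injective b := by
    intro i j hij
    apply hainj
    have h1 : a i * b i = a j * b i := by rw [← hb i, hij, ← hb j]
    exact Nat.eq_of_mul_eq_mul_right (hb0 i) h1
  obtain ⟨i, j, hij, hR⟩ := hDHL b hb0 hbinj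
  obtain ⟨i, j, hlt, hR⟩ : ∃ i j : Fin 50, a j < a i ∧
      {r : ℕ | 0 < r ∧ (b i * r - 1).Prime ∧ (b j * r - 1).Prime}.Infinite := by
    rcases lt_or_gt_of_ne (fun h => hij (hainj h) : a i ≠ a j) with h | h
    · refine ⟨j, i, h, hR.mono ?_⟩
      rintro r ⟨h0, h1, h2⟩
      exact ⟨h0, h2, h1⟩
    · exact ⟨i, j, h, hR⟩
  exact aux_density (S := {k : ℕ | {n : ℕ | 0 < n ∧ sigma n = sigma (n + k)}.Infinite})
    hL (Nat.sub_pos_of_lt hlt) fun t =>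
      aux_core hL (hb i).symm (hb j).symm hlt (has i j) (by simp) (by omega) hR
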